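/- arXiv:1504.02625 — 2 statements merged into one kernel-verified Lean document; each statement's English description precedes it below -/
import Mathlib

section
/- Zero is an eigenvalue of infinite multiplicity of the partial integral operator T₁, i.e. the kernel of T₁ is an infinite-dimensional subspace of H. Moreover, a number λ₀ ≠ 0 is an eigenvalue of T₁ if and only if there exists j₀ ∈ {1,…,n} such that the set h_{j₀}⁻¹({λ₀}) = {y ∈ [c,d] : h_{j₀}(y) = λ₀} has positive Lebesgue measure. -/
open MeasureTheory Complex

noncomputable section

/-- The measure on `ℝ` given by restricting Lebesgue measure to `[a,b]`. -/
abbrev muI (a b : ℝ) : MeasureTheory.Measure ℝ :=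
  MeasureTheory.volume.restrict (Set.Icc a b)

open scoped ENNReal Function

/-!
For fixed `y` the operator acts on the slice `f(·, y)` as `∑ k, h k y • ⟨φ k, ·⟩ φ k`, so in terms
of the coefficients `a k y = ⟨φ k, f(·, y)⟩` it is multiplication by `h k`. It annihilates `u ⊗ v`
for every `u` in the orthogonal complement of the finitely many `φ k`, which is
infinite-dimensional.

If `T f = c • f`, then `(h k - c) * a k = 0` almost everywhere. When no `h k` takes the value `c`
on a set of positive measure, all coefficients vanish, hence `c • f = T f = 0`. Conversely, if
`h j = c` on a set of positive measure, then `φ j ⊗ v` is an eigenvector for any nonzero `v`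
supported on that set.
-/

section L2

variable {𝕜 X ι : Type*} [RCLike 𝕜] [MeasurableSpace X]

theorem indicatorConstLp_ne_zero {E : Type*} [NormedAddCommGroup E] {p : ℝ≥0∞} {μ : Measure X}
    {s : Set X} (hs : MeasurableSet s) (hs_top : μ s ≠ ∞) (hs₀ : μ s ≠ 0) {c : E} (hc : c ≠ 0) :
    indicatorConstLp p hs hs_top c ≠ 0 := by
  intro hzero
  refine hs₀ (measure_eq_zero_iff_ae_notMem.2 ?_)
  filter_upwards [indicatorConstLp_coeFn_mem (p := p) (hs := hs) (hμs := hs_top) (c := c),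
    (Lp.eq_zero_iff_ae_eq_zero).1 hzero] with x hx hx₀ hxs
  exact hc ((hx hxs).symm.trans hx₀)

theorem not_finiteDimensional_L2_of_aedisjoint [Infinite ι] {μ : Measure X} {s : ι → Set X}
    (hs : ∀ i, MeasurableSet (s i)) (hs₀ : ∀ i, μ (s i) ≠ 0) (hs_top : ∀ i, μ (s i) ≠ ∞)
    (hdisj : Pairwise (AEDisjoint μ on s)) : ¬ FiniteDimensional 𝕜 (Lp 𝕜 2 μ) := by
  have hindep : LinearIndependent 𝕜 fun i ↦ indicatorConstLp 2 (hs i) (hs_top i) (1 : 𝕜) := by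
    refine linearIndependent_of_ne_zero_of_inner_eq_zero
      (fun i ↦ indicatorConstLp_ne_zero (hs i) (hs_top i) (hs₀ i) one_ne_zero) fun i j hij ↦ ?_
    have hinter : μ.real (s i ∩ s j) = 0 := by rw [measureReal_def, hdisj hij, ENNReal.toReal_zero]
    simp only [L2.inner_indicatorConstLp_one_indicatorConstLp_one (hs i) (hs j) (hs_top i)
      (hs_top j), hinter, RCLike.ofReal_zero]
  exact fun _ ↦ Infinite.not_finite hindep.finite

theorem not_finiteDimensional_L2_restrict_Icc [LinearOrder X] [DenselyOrdered X]
    [TopologicalSpace X] [OrderTopology X] [CompactIccSpace X] [OpensMeasurableSpace X]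
    (μ : Measure X) [μ.IsOpenPosMeasure] [IsFiniteMeasureOnCompacts μ] {a b : X} (hab : a < b) :
    ¬ FiniteDimensional 𝕜 (Lp 𝕜 2 (μ.restrict (Set.Icc a b))) := by
  have : Nonempty (Set.Ioo a b) := (Set.nonempty_Ioo.2 hab).to_subtype
  obtain ⟨t, ht⟩ := Nat.exists_strictMono (Set.Ioo a b)
  let u : ℕ → X := fun n ↦ t n
  have hu : StrictMono u := fun _ _ hmn ↦ ht hmn
  have hsub : ∀ n, Set.Ioo (u n) (u (n + 1)) ⊆ Set.Icc a b := fun n ↦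
    Set.Ioo_subset_Icc_self.trans (Set.Icc_subset_Icc (t n).2.1.le (t (n + 1)).2.2.le)
  have hmeasure : ∀ n, μ.restrict (Set.Icc a b) (Set.Ioo (u n) (u (n + 1))) =
      μ (Set.Ioo (u n) (u (n + 1))) := fun n ↦ by
    rw [Measure.restrict_apply isOpen_Ioo.measurableSet, Set.inter_eq_left.2 (hsub n)]
  refine not_finiteDimensional_L2_of_aedisjoint (s := fun n ↦ Set.Ioo (u n) (u (n + 1)))
    (fun n ↦ isOpen_Ioo.measurableSet) (fun n ↦ ?_) (fun n ↦ ?_) ?_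
  · rw [hmeasure]
    exact isOpen_Ioo.measure_ne_zero μ (Set.nonempty_Ioo.2 (hu n.lt_succ_self))
  · rw [hmeasure]
    exact measure_ne_top_of_subset (hsub n) isCompact_Icc.measure_ne_top
  · exact fun i j hij ↦ (hu.monotone.pairwise_disjoint_on_Ioo_succ hij).aedisjoint

theorem not_finiteDimensional_orthogonal {E : Type*} [NormedAddCommGroup E] [InnerProductSpace 𝕜 E]
    (hE : ¬ FiniteDimensional 𝕜 E) (K : Submodule 𝕜 E) [FiniteDimensional 𝕜 K] :
    ¬ FiniteDimensional 𝕜 Kᗮ := by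
  intro _
  have htop : FiniteDimensional 𝕜 (⊤ : Submodule 𝕜 E) := by
    rw [← Submodule.sup_orthogonal_of_hasOrthogonalProjection (K := K)]
    infer_instance
  exact hE (Module.finite_def.2 (Submodule.fg_top _ |>.1 (Module.finite_def.1 htop)))

theorem exists_Lp_ne_zero_eq_zero_off (p : ℝ≥0∞) {μ : Measure X} [SigmaFinite μ] {s : Set X}
    (hs : NullMeasurableSet s μ) (hs₀ : 0 < μ s) :
    ∃ v : Lp 𝕜 p μ, v ≠ 0 ∧ ∀ᵐ x ∂μ, x ∉ s → v x = 0 := by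
  obtain ⟨r, hrs, hr, hr_ae⟩ := hs.exists_measurable_subset_ae_eq
  obtain ⟨t, ht, htr, ht₀, ht_top⟩ :=
    Measure.exists_subset_measure_lt_top hr (hs₀.trans_eq (measure_congr hr_ae).symm)
  refine ⟨indicatorConstLp p ht ht_top.ne 1,
    indicatorConstLp_ne_zero ht ht_top.ne ht₀.ne' one_ne_zero, ?_⟩
  filter_upwards [indicatorConstLp_coeFn_notMem (p := p) (hs := ht) (hμs := ht_top.ne)
    (c := (1 : 𝕜))] with x hx hxs
  exact hx fun hxt ↦ hxs (hrs (htr hxt))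

theorem inner_toLp_left {μ : Measure X} {u : X → 𝕜} (hu : MemLp u 2 μ) (f : Lp 𝕜 2 μ) :
    inner 𝕜 (hu.toLp u) f = ∫ x, star (u x) * f x ∂μ := by
  rw [L2.inner_def]
  refine integral_congr_ae ?_
  filter_upwards [hu.coeFn_toLp] with x hx
  rw [hx, RCLike.inner_apply', RCLike.star_def]

theorem orthonormal_toLp_iff [DecidableEq ι] {μ : Measure X} {φ : ι → X → 𝕜}
    (hφ : ∀ k, MemLp (φ k) 2 μ) :
    Orthonormal 𝕜 (fun k ↦ (hφ k).toLp (φ k)) ↔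
      ∀ i j, ∫ x, star (φ i x) * φ j x ∂μ = if i = j then 1 else 0 := by
  have hinner : ∀ i j, inner 𝕜 ((hφ i).toLp (φ i)) ((hφ j).toLp (φ j)) =
      ∫ x, star (φ i x) * φ j x ∂μ := fun i j ↦ by
    rw [inner_toLp_left]
    refine integral_congr_ae ?_
    filter_upwards [(hφ j).coeFn_toLp] with x hx
    rw [hx]
  simp only [orthonormal_iff_ite, hinner]

/-- The partial inner product `⟨w, f(·, y)⟩` over the first variable, as a function of the second.
Like any Bochner integral it is `0` at those `y` where the integrand is not integrable. -/
def partialInner {Y : Type*} (μ : Measure X) (w : X → 𝕜) (f : X × Y → 𝕜) (y : Y) : 𝕜 :=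
  ∫ s, star (w s) * f (s, y) ∂μ

theorem partialInner_const_smul {Y : Type*} {μ : Measure X} (w : X → 𝕜) (c : 𝕜) (f : X × Y → 𝕜)
    (y : Y) : partialInner μ w (c • f) y = c * partialInner μ w f y := by
  simp only [partialInner, Pi.smul_apply, smul_eq_mul, mul_left_comm _ c, integral_const_mul]

end L2

section Product

variable {X Y : Type*} [MeasurableSpace X] [MeasurableSpace Y] {μ : Measure X} {ν : Measure Y}

theorem ae_ae_of_ae_prod_swap [SFinite μ] [SFinite ν] {P : X × Y → Prop}
    (hP : ∀ᵐ z ∂μ.prod ν, P z) : ∀ᵐ y ∂ν, ∀ᵐ x ∂μ, P (x, y) :=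
  Measure.ae_ae_of_ae_prod (Measure.measurePreserving_swap.quasiMeasurePreserving.ae hP)

theorem ae_memLp_prodMk_right [SFinite μ] [SFinite ν] {E : Type*} [NormedAddCommGroup E] {p : ℝ≥0∞}
    (hp₀ : p ≠ 0) (hp : p ≠ ∞) {f : X × Y → E} (hf : MemLp f p (μ.prod ν)) :
    ∀ᵐ y ∂ν, MemLp (fun x ↦ f (x, y)) p μ := by
  filter_upwards [((integrable_norm_rpow_iff hf.1 hp₀ hp).2 hf).prod_left_ae, hf.1.prodMk_right]
    with y hint hmeas
  exact (integrable_norm_rpow_iff hmeas hp₀ hp).1 hint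

theorem eLpNorm_fst_mul_snd {R : Type*} [NormedRing R] [NormMulClass R] [SFinite ν] {p : ℝ≥0∞}
    (hp : p ≠ ∞) {u : X → R} {v : Y → R} (hu : AEStronglyMeasurable u μ)
    (hv : AEStronglyMeasurable v ν) :
    eLpNorm (fun z : X × Y ↦ u z.1 * v z.2) p (μ.prod ν) = eLpNorm u p μ * eLpNorm v p ν := by
  rcases eq_or_ne p 0 with rfl | hp₀
  · simp only [eLpNorm_exponent_zero, mul_zero]
  simp only [eLpNorm_eq_lintegral_rpow_enorm_toReal hp₀ hp, enorm_mul,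
    ENNReal.mul_rpow_of_nonneg _ _ ENNReal.toReal_nonneg]
  rw [lintegral_prod_mul (hu.enorm.pow_const _) (hv.enorm.pow_const _),
    ENNReal.mul_rpow_of_nonneg _ _ (by positivity)]

theorem memLp_fst_mul_snd {R : Type*} [NormedRing R] [NormMulClass R] [SFinite ν] {p : ℝ≥0∞}
    (hp : p ≠ ∞) {u : X → R} {v : Y → R} (hu : MemLp u p μ) (hv : MemLp v p ν) :
    MemLp (fun z : X × Y ↦ u z.1 * v z.2) p (μ.prod ν) :=
  ⟨hu.1.comp_fst.mul hv.1.comp_snd,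
    (eLpNorm_fst_mul_snd hp hu.1 hv.1).trans_lt (ENNReal.mul_lt_top hu.2 hv.2)⟩

variable {𝕜 : Type*} [RCLike 𝕜]

/-- The map `u ↦ u ⊗ v` from `L²(μ)` to `L²(μ × ν)`, where `(u ⊗ v)(x, y) = u x * v y`. -/
def tensorRight [SFinite ν] (v : Lp 𝕜 2 ν) : Lp 𝕜 2 μ →ₗ[𝕜] Lp 𝕜 2 (μ.prod ν) where
  toFun u := (memLp_fst_mul_snd ENNReal.ofNat_ne_top (Lp.memLp u) (Lp.memLp v)).toLp _
  map_add' u₁ u₂ := by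
    rw [← MemLp.toLp_add]
    refine MemLp.toLp_congr _ _ ?_
    filter_upwards [Measure.quasiMeasurePreserving_fst.ae (Lp.coeFn_add u₁ u₂)] with z hz
    simp only [hz, Pi.add_apply, add_mul]
  map_smul' c u := by
    rw [RingHom.id_apply, ← MemLp.toLp_const_smul]
    refine MemLp.toLp_congr _ _ ?_
    filter_upwards [Measure.quasiMeasurePreserving_fst.ae (Lp.coeFn_smul c u)] with z hz
    simp only [hz, Pi.smul_apply, smul_mul_assoc]

theorem coeFn_tensorRight [SFinite ν] (v : Lp 𝕜 2 ν) (u : Lp 𝕜 2 μ) :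
    tensorRight v u =ᵐ[μ.prod ν] fun z ↦ u z.1 * v z.2 :=
  (memLp_fst_mul_snd ENNReal.ofNat_ne_top (Lp.memLp u) (Lp.memLp v)).coeFn_toLp

theorem norm_tensorRight [SFinite ν] (v : Lp 𝕜 2 ν) (u : Lp 𝕜 2 μ) :
    ‖tensorRight v u‖ = ‖u‖ * ‖v‖ := by
  simp only [Lp.norm_def, ← ENNReal.toReal_mul]
  rw [eLpNorm_congr_ae (coeFn_tensorRight v u),
    eLpNorm_fst_mul_snd ENNReal.ofNat_ne_top (Lp.aestronglyMeasurable u)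
      (Lp.aestronglyMeasurable v)]

theorem tensorRight_injective [SFinite ν] {v : Lp 𝕜 2 ν} (hv : v ≠ 0) :
    Function.Injective (tensorRight v : Lp 𝕜 2 μ →ₗ[𝕜] Lp 𝕜 2 (μ.prod ν)) := by
  refine (injective_iff_map_eq_zero _).2 fun u hu ↦ ?_
  rw [← norm_eq_zero, norm_tensorRight, mul_eq_zero] at hu
  exact norm_eq_zero.1 (hu.resolve_right (norm_ne_zero_iff.2 hv))

theorem partialInner_congr_ae [SFinite μ] [SFinite ν] (w : X → 𝕜) {f g : X × Y → 𝕜}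
    (hfg : f =ᵐ[μ.prod ν] g) : partialInner μ w f =ᵐ[ν] partialInner μ w g := by
  filter_upwards [ae_ae_of_ae_prod_swap hfg] with y hy
  refine integral_congr_ae ?_
  filter_upwards [hy] with s hs
  rw [hs]

theorem partialInner_tensorRight [SFinite μ] [SFinite ν] {w : X → 𝕜} (hw : MemLp w 2 μ)
    (v : Lp 𝕜 2 ν) (u : Lp 𝕜 2 μ) :
    ∀ᵐ y ∂ν, partialInner μ w (tensorRight v u) y = inner 𝕜 (hw.toLp w) u * v y := by
  filter_upwards [partialInner_congr_ae w (coeFn_tensorRight v u)] with y hy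
  rw [hy, inner_toLp_left, ← integral_mul_const]
  simp only [partialInner, mul_assoc]

end Product

/-- `T` is the partial integral operator on `L²(μ × ν)`, integrating over the first variable against
the degenerate kernel `∑ k, φ k x * conj (φ k s) * h k y`. This is a predicate on an everywhere
defined linear map rather than a construction, so that no bound on the `h k` has to be imposed. -/
def IsPartialIntegralOperator {𝕜 X Y ι : Type*} [RCLike 𝕜] [MeasurableSpace X] [MeasurableSpace Y]
    [Fintype ι] {μ : Measure X} {ν : Measure Y} (φ : ι → X → 𝕜) (h : ι → Y → 𝕜)
    (T : Lp 𝕜 2 (μ.prod ν) →ₗ[𝕜] Lp 𝕜 2 (μ.prod ν)) : Prop :=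
  ∀ f : Lp 𝕜 2 (μ.prod ν), ∀ᵐ z ∂μ.prod ν,
    T f z = ∫ s, (∑ k, φ k z.1 * star (φ k s) * h k z.2) * f (s, z.2) ∂μ

namespace IsPartialIntegralOperator

variable {𝕜 X Y ι : Type*} [RCLike 𝕜] [MeasurableSpace X] [MeasurableSpace Y] [Fintype ι]
  {μ : Measure X} {ν : Measure Y} {φ : ι → X → 𝕜} {h : ι → Y → 𝕜}
  {T : Lp 𝕜 2 (μ.prod ν) →ₗ[𝕜] Lp 𝕜 2 (μ.prod ν)}

theorem apply_ae_eq_sum [SFinite μ] [SFinite ν] (hT : IsPartialIntegralOperator φ h T)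
    (hφ : ∀ k, MemLp (φ k) 2 μ) (f : Lp 𝕜 2 (μ.prod ν)) :
    ∀ᵐ z ∂μ.prod ν, T f z = ∑ k, φ k z.1 * (h k z.2 * partialInner μ (φ k) f z.2) := by
  have hslice : ∀ᵐ y ∂ν, MemLp (fun x ↦ f (x, y)) 2 μ :=
    ae_memLp_prodMk_right two_ne_zero ENNReal.ofNat_ne_top (Lp.memLp f)
  filter_upwards [hT f, Measure.quasiMeasurePreserving_snd.ae hslice] with z hTz hfz
  have hint : ∀ k, Integrable (fun s ↦ star (φ k s) * f (s, z.2)) μ := fun k ↦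
    (hφ k).star.integrable_mul hfz
  calc T f z
      = ∫ s, ∑ k, φ k z.1 * h k z.2 * (star (φ k s) * f (s, z.2)) ∂μ := by
        rw [hTz]
        refine integral_congr_ae (ae_of_all _ fun s ↦ ?_)
        simp only [Finset.sum_mul]
        exact Finset.sum_congr rfl fun k _ ↦ by ring
    _ = ∑ k, φ k z.1 * (h k z.2 * partialInner μ (φ k) f z.2) := by
        rw [integral_finsetSum _ fun k _ ↦ (hint k).const_mul _]
        simp only [integral_const_mul, mul_assoc, partialInner]

theorem apply_tensorRight_ae_eq_sum [SFinite μ] [SFinite ν]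
    (hT : IsPartialIntegralOperator φ h T) (hφ : ∀ k, MemLp (φ k) 2 μ)
    (v : Lp 𝕜 2 ν) (u : Lp 𝕜 2 μ) :
    ∀ᵐ z ∂μ.prod ν, T (tensorRight v u) z =
      ∑ k, φ k z.1 * (h k z.2 * (inner 𝕜 ((hφ k).toLp (φ k)) u * v z.2)) := by
  have hcoeff : ∀ᵐ y ∂ν, ∀ k, partialInner μ (φ k) (tensorRight v u) y =
      inner 𝕜 ((hφ k).toLp (φ k)) u * v y :=
    ae_all_iff.2 fun k ↦ partialInner_tensorRight (hφ k) v u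
  filter_upwards [hT.apply_ae_eq_sum hφ (tensorRight v u),
    Measure.quasiMeasurePreserving_snd.ae hcoeff] with z hTz hz
  simp only [hTz, hz]

theorem not_finiteDimensional_ker [SFinite μ] [SigmaFinite ν]
    (hT : IsPartialIntegralOperator φ h T) (hφ : ∀ k, MemLp (φ k) 2 μ)
    (hμ : ¬ FiniteDimensional 𝕜 (Lp 𝕜 2 μ)) (hν : ν ≠ 0) :
    ¬ FiniteDimensional 𝕜 (LinearMap.ker T) := by
  obtain ⟨v, hv, -⟩ := exists_Lp_ne_zero_eq_zero_off (𝕜 := 𝕜) 2 (μ := ν) .univ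
    (Measure.measure_univ_pos.2 hν)
  let K : Submodule 𝕜 (Lp 𝕜 2 μ) := Submodule.span 𝕜 (Set.range fun k ↦ (hφ k).toLp (φ k))
  have : FiniteDimensional 𝕜 K := FiniteDimensional.span_of_finite 𝕜 (Set.finite_range _)
  have hle : Kᗮ.map (tensorRight v) ≤ LinearMap.ker T := by
    rintro _ ⟨u, hu, rfl⟩
    have horth : ∀ k, inner 𝕜 ((hφ k).toLp (φ k)) u = 0 := fun k ↦
      hu _ (Submodule.subset_span ⟨k, rfl⟩)
    rw [LinearMap.mem_ker, Lp.eq_zero_iff_ae_eq_zero]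
    filter_upwards [hT.apply_tensorRight_ae_eq_sum hφ v u] with z hz
    simp only [hz, horth, zero_mul, mul_zero, Finset.sum_const_zero, Pi.zero_apply]
  intro _
  have : FiniteDimensional 𝕜 (Kᗮ.map (tensorRight v)) := Submodule.finiteDimensional_of_le hle
  exact not_finiteDimensional_orthogonal hμ K
    (Submodule.equivMapOfInjective _ (tensorRight_injective hv) Kᗮ).symm.finiteDimensional

theorem partialInner_apply_ae_eq [SFinite μ] [SFinite ν] (hT : IsPartialIntegralOperator φ h T)
    (hφ : ∀ k, MemLp (φ k) 2 μ) (hφo : Orthonormal 𝕜 fun k ↦ (hφ k).toLp (φ k))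
    (f : Lp 𝕜 2 (μ.prod ν)) (j : ι) :
    ∀ᵐ y ∂ν, partialInner μ (φ j) (T f) y = h j y * partialInner μ (φ j) f y := by
  classical
  filter_upwards [partialInner_congr_ae (φ j) (hT.apply_ae_eq_sum hφ f)] with y hy
  have hint : ∀ k, Integrable (fun s ↦ star (φ j s) * φ k s) μ := fun k ↦
    (hφ j).star.integrable_mul (hφ k)
  rw [hy]
  simp only [partialInner, Finset.mul_sum, ← mul_assoc (star _)]
  rw [integral_finsetSum _ fun k _ ↦ (hint k).mul_const _]
  simp only [integral_mul_const, (orthonormal_toLp_iff hφ).1 hφo, ite_mul, one_mul, zero_mul,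
    Finset.sum_ite_eq, Finset.mem_univ, if_true]

theorem eigenvector_eq_zero [SFinite μ] [SFinite ν] (hT : IsPartialIntegralOperator φ h T)
    (hφ : ∀ k, MemLp (φ k) 2 μ) (hφo : Orthonormal 𝕜 fun k ↦ (hφ k).toLp (φ k))
    {c : 𝕜} (hc : c ≠ 0) (hne : ∀ j, ∀ᵐ y ∂ν, h j y ≠ c)
    {f : Lp 𝕜 2 (μ.prod ν)} (hf : T f = c • f) : f = 0 := by
  have hcoeff : ∀ᵐ y ∂ν, ∀ j, partialInner μ (φ j) f y = 0 := by
    refine ae_all_iff.2 fun j ↦ ?_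
    filter_upwards [hT.partialInner_apply_ae_eq hφ hφo f j, hne j,
      partialInner_congr_ae (φ j) (Lp.coeFn_smul c f)] with y hTy hy hsmul
    rw [hf, hsmul, partialInner_const_smul] at hTy
    exact (mul_eq_mul_right_iff.1 hTy).resolve_left hy.symm
  have hTf : T f = 0 := by
    rw [Lp.eq_zero_iff_ae_eq_zero]
    filter_upwards [hT.apply_ae_eq_sum hφ f,
      Measure.quasiMeasurePreserving_snd.ae hcoeff] with z hTz hz
    simp only [hTz, hz, mul_zero, Finset.sum_const_zero, Pi.zero_apply]
  exact (smul_eq_zero.1 (hf.symm.trans hTf)).resolve_left hc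

theorem apply_tensorRight_eq_smul [SFinite μ] [SFinite ν] (hT : IsPartialIntegralOperator φ h T)
    (hφ : ∀ k, MemLp (φ k) 2 μ) (hφo : Orthonormal 𝕜 fun k ↦ (hφ k).toLp (φ k))
    {c : 𝕜} {j : ι} {v : Lp 𝕜 2 ν} (hv : ∀ᵐ y ∂ν, h j y ≠ c → v y = 0) :
    T (tensorRight v ((hφ j).toLp (φ j))) = c • tensorRight v ((hφ j).toLp (φ j)) := by
  classical
  refine Lp.ext ?_
  filter_upwards [hT.apply_tensorRight_ae_eq_sum hφ v ((hφ j).toLp (φ j)),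
    coeFn_tensorRight v ((hφ j).toLp (φ j)), Lp.coeFn_smul c (tensorRight v ((hφ j).toLp (φ j))),
    Measure.quasiMeasurePreserving_fst.ae (hφ j).coeFn_toLp,
    Measure.quasiMeasurePreserving_snd.ae hv] with z hTz htensor hsmul hφz hvz
  have hmul : h j z.2 * v z.2 = c * v z.2 :=
    mul_eq_mul_right_iff.2 (or_iff_not_imp_left.2 hvz)
  simp only [hTz, hsmul, Pi.smul_apply, smul_eq_mul, htensor, hφz, orthonormal_iff_ite.1 hφo,
    ite_mul, one_mul, zero_mul, mul_ite, mul_zero, Finset.sum_ite_eq', Finset.mem_univ, if_true,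
    hmul, mul_left_comm c]

theorem exists_eigenvector_iff [SFinite μ] [SigmaFinite ν] (hT : IsPartialIntegralOperator φ h T)
    (hφ : ∀ k, MemLp (φ k) 2 μ) (hφo : Orthonormal 𝕜 fun k ↦ (hφ k).toLp (φ k))
    (hh : ∀ k, AEMeasurable (h k) ν) {c : 𝕜} (hc : c ≠ 0) :
    (∃ f, f ≠ 0 ∧ T f = c • f) ↔ ∃ j, 0 < ν (h j ⁻¹' {c}) := by
  constructor
  · rintro ⟨f, hf₀, hf⟩
    contrapose! hf₀
    exact hT.eigenvector_eq_zero hφ hφo hc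
      (fun j ↦ measure_eq_zero_iff_ae_notMem.1 (nonpos_iff_eq_zero.1 (hf₀ j))) hf
  · rintro ⟨j, hj⟩
    obtain ⟨v, hv₀, hv⟩ := exists_Lp_ne_zero_eq_zero_off (𝕜 := 𝕜) 2
      ((hh j).nullMeasurable (measurableSet_singleton c)) hj
    exact ⟨_, (map_ne_zero_iff _ (tensorRight_injective hv₀)).2 (hφo.ne_zero j),
      hT.apply_tensorRight_eq_smul hφ hφo hv⟩

end IsPartialIntegralOperator

theorem statement0_general {𝕜 X Y ι : Type*} [RCLike 𝕜] [MeasurableSpace X] [MeasurableSpace Y]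
    [Fintype ι] {μ : Measure X} {ν : Measure Y} [SFinite μ] [SigmaFinite ν]
    (hμ : ¬ FiniteDimensional 𝕜 (Lp 𝕜 2 μ)) (hν : ν ≠ 0)
    {φ : ι → X → 𝕜} (hφ : ∀ k, MemLp (φ k) 2 μ)
    (hφo : Orthonormal 𝕜 fun k ↦ (hφ k).toLp (φ k))
    {h : ι → Y → 𝕜} (hh : ∀ k, AEMeasurable (h k) ν)
    {T : Lp 𝕜 2 (μ.prod ν) →ₗ[𝕜] Lp 𝕜 2 (μ.prod ν)} (hT : IsPartialIntegralOperator φ h T) :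
    ¬ FiniteDimensional 𝕜 (LinearMap.ker T) ∧
      ∀ c : 𝕜, c ≠ 0 → ((∃ f, f ≠ 0 ∧ T f = c • f) ↔ ∃ j, 0 < ν (h j ⁻¹' {c})) :=
  ⟨hT.not_finiteDimensional_ker hφ hμ hν, fun _ hc ↦ hT.exists_eigenvector_iff hφ hφo hh hc⟩

theorem statement0
    (a b c d : ℝ) (hab : a < b) (hcd : c < d)
    (n : ℕ) (hn : 1 ≤ n)
    (φ : Fin n → ℝ → ℂ)
    (hφL2 : ∀ k, MemLp (φ k) 2 (muI a b))
    (hφON : ∀ i j, ∫ x, star (φ i x) * φ j x ∂(muI a b) = if i = j then 1 else 0)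
    (h : Fin n → ℝ → ℝ)
    (hhmeas : ∀ k, Measurable (h k))
    (hhbdd : ∀ k, ∃ C : ℝ, ∀ᵐ y ∂(muI c d), |h k y| ≤ C)
    (T1 : Lp ℂ 2 ((muI a b).prod (muI c d)) →L[ℂ] Lp ℂ 2 ((muI a b).prod (muI c d)))
    (hT1sa : IsSelfAdjoint T1)
    (hT1 : ∀ f : Lp ℂ 2 ((muI a b).prod (muI c d)),
      ∀ᵐ z ∂((muI a b).prod (muI c d)),
        T1 f z = ∫ s, (∑ k, φ k z.1 * star (φ k s) * (h k z.2 : ℂ)) * f (s, z.2) ∂(muI a b)) :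
    ¬ FiniteDimensional ℂ ↥(LinearMap.ker T1.toLinearMap) ∧
      ∀ lam : ℝ, lam ≠ 0 →
        ((∃ f : Lp ℂ 2 ((muI a b).prod (muI c d)), f ≠ 0 ∧ T1 f = (lam : ℂ) • f) ↔
          ∃ j : Fin n, 0 < muI c d (h j ⁻¹' {lam})) := by
  have hν : muI c d ≠ 0 := by
    simpa [Measure.restrict_eq_zero] using hcd
  obtain ⟨hker, heigen⟩ := statement0_general (h := fun k y ↦ (h k y : ℂ))
    (not_finiteDimensional_L2_restrict_Icc volume hab) hν hφL2 ((orthonormal_toLp_iff hφL2).2 hφON)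
    (fun k ↦ (hhmeas k).complex_ofReal.aemeasurable) (T := T1.toLinearMap) hT1
  refine ⟨hker, fun lam hlam ↦ (heigen lam (ofReal_ne_zero.2 hlam)).trans ?_⟩
  simp only [Set.preimage, Set.mem_singleton_iff, ofReal_inj]
end
end

section
/- The spectrum of the partial integral operator T₁ is σ(T₁) = {0} ∪ (⋃_{k=1}^n Essran(h_k)). -/
open MeasureTheory Complex

noncomputable section

/-- The essential range of a function `φ` with respect to a measure `μ` on `ℝ`. -/
def Essran (μ : MeasureTheory.Measure ℝ) (φ : ℝ → ℝ) : Set ℝ :=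
  {l : ℝ | ∀ ε > 0, 0 < μ {ξ : ℝ | l - ε < φ ξ ∧ φ ξ < l + ε}}

open scoped ENNReal

/-!
Since the `φ k` are orthonormal, `V k g = φ k ⊗ g` embeds `L²(ν)` isometrically into `L²(μ ⊗ ν)`,
the images for distinct `k` are orthogonal, and `T₁ = ∑ k, V k ∘ M k ∘ (V k)†` with `M k` the
multiplication by `h k`. Thus `T₁` is the orthogonal direct sum of copies of the `M k` and of the
zero operator on the complement of these images. The complement is nonzero because `L²(μ)` is not
spanned by the `φ k`, and the spectrum of `M k` is the essential range of `h k`, that is, the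
topological support of the pushforward measure `ν.map (h k)`.
-/

section EssentialRange

variable {Y E : Type*} [MeasurableSpace Y] [PseudoMetricSpace E] [MeasurableSpace E]
  [OpensMeasurableSpace E] {ν : Measure Y} {m : Y → E} {l : E}

lemma mem_support_map_iff (hm : AEMeasurable m ν) :
    l ∈ (ν.map m).support ↔ ∀ ε > 0, 0 < ν {y | dist (m y) l < ε} := by
  rw [Metric.nhds_basis_ball.mem_measureSupport]
  refine forall₂_congr fun ε _ => ?_
  rw [Measure.map_apply_of_aemeasurable hm Metric.isOpen_ball.measurableSet]
  rfl

lemma notMem_support_map_iff (hm : AEMeasurable m ν) :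
    l ∉ (ν.map m).support ↔ ∃ ε > 0, ∀ᵐ y ∂ν, ε ≤ dist (m y) l := by
  simp [mem_support_map_iff hm, ae_iff]

lemma Essran_eq_support_map {μ : Measure ℝ} {φ : ℝ → ℝ} (hφ : AEMeasurable φ μ) :
    Essran μ φ = (μ.map φ).support := by
  ext l
  rw [mem_support_map_iff hφ]
  refine forall₂_congr fun ε _ => ?_
  simp only [Real.dist_eq, abs_sub_lt_iff, sub_lt_iff_lt_add, sub_lt_comm (b := l), and_comm,
    add_comm]

lemma support_map_of_isClosedEmbedding {E F : Type*} [TopologicalSpace E] [MeasurableSpace E]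
    [BorelSpace E] [TopologicalSpace F] [MeasurableSpace F] [BorelSpace F] {μ : Measure E}
    {f : E → F} (hf : Topology.IsClosedEmbedding f) : (μ.map f).support = f '' μ.support := by
  have hpre (x : E) : f x ∈ (μ.map f).support ↔ x ∈ μ.support := by
    have hbasis : (nhds x).HasBasis (· ∈ nhds (f x)) (f ⁻¹' ·) :=
      hf.isInducing.nhds_eq_comap x ▸ (nhds (f x)).basis_sets.comap f
    simp_rw [hbasis.mem_measureSupport, Measure.mem_support_iff_forall,
      hf.measurableEmbedding.map_apply]
  have hrange : (μ.map f).support ⊆ Set.range f := by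
    refine Measure.support_subset_of_isClosed hf.isClosed_range ?_
    rw [mem_ae_iff, hf.measurableEmbedding.map_apply]
    simp
  ext l
  constructor
  · intro hl
    obtain ⟨x, rfl⟩ := hrange hl
    exact ⟨x, (hpre x).1 hl, rfl⟩
  · rintro ⟨x, hx, rfl⟩
    exact (hpre x).2 hx

lemma image_ofReal_Essran {μ : Measure ℝ} {φ : ℝ → ℝ} (hφ : AEMeasurable φ μ) :
    (fun r : ℝ => (r : ℂ)) '' Essran μ φ = (μ.map fun y => (φ y : ℂ)).support := by
  rw [Essran_eq_support_map hφ,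
    ← support_map_of_isClosedEmbedding Complex.isometry_ofReal.isClosedEmbedding,
    AEMeasurable.map_map_of_aemeasurable Complex.measurable_ofReal.aemeasurable hφ]
  rfl

end EssentialRange

section BlockSum

lemma isUnit_algebraMap_sub_of_corner_inverse {𝕜 A : Type*} [Field 𝕜] [Ring A] [Algebra 𝕜 A]
    {l : 𝕜} (hl : l ≠ 0) {P T S : A} (hTP : T * P = T) (hPT : P * T = T) (hSP : S * P = S)
    (hPS : P * S = S) (hright : (l • P - T) * S = P) (hleft : S * (l • P - T) = P) :
    IsUnit (algebraMap 𝕜 A l - T) := by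
  rw [sub_mul, smul_mul_assoc, hPS] at hright
  rw [mul_sub, mul_smul_comm, hSP] at hleft
  refine isUnit_iff_exists.2 ⟨l⁻¹ • (1 - P) + S, ?_, ?_⟩
  · calc (algebraMap 𝕜 A l - T) * (l⁻¹ • (1 - P) + S)
        = (l * l⁻¹) • (1 - P) - l⁻¹ • (T - T * P) + (l • S - T * S) := by
          simp only [Algebra.algebraMap_eq_smul_one, mul_add, sub_mul, mul_smul_comm,
            smul_mul_assoc, mul_sub, mul_one, one_mul]
          module
      _ = 1 := by rw [mul_inv_cancel₀ hl, hTP, hright]; simp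
  · calc (l⁻¹ • (1 - P) + S) * (algebraMap 𝕜 A l - T)
        = (l⁻¹ * l) • (1 - P) - l⁻¹ • (T - P * T) + (l • S - S * T) := by
          simp only [Algebra.algebraMap_eq_smul_one, add_mul, mul_sub, mul_smul_comm,
            smul_mul_assoc, sub_mul, mul_one, one_mul]
          module
      _ = 1 := by rw [inv_mul_cancel₀ hl, hPT, hleft]; simp

variable {𝕜 ι H : Type*} [Fintype ι] [Field 𝕜]
  [AddCommGroup H] [TopologicalSpace H] [IsTopologicalAddGroup H] [Module 𝕜 H]
  {K : ι → Type*} [∀ k, AddCommGroup (K k)] [∀ k, TopologicalSpace (K k)] [∀ k, Module 𝕜 (K k)]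

/-- The operator on `H` acting as `M k` on the image of `V k`, where `W k` reads off the `k`-th
coordinate: if `W i (V j u)` is `u` for `i = j` and `0` otherwise, the images of the `V k` form an
internal direct sum, on whose complement `⋂ k, ker (W k)` the operator vanishes. -/
def blockSum (V : ∀ k, K k →L[𝕜] H) (W : ∀ k, H →L[𝕜] K k) (M : ∀ k, K k →L[𝕜] K k) : H →L[𝕜] H :=
  ∑ k, V k ∘L M k ∘L W k

variable {V : ∀ k, K k →L[𝕜] H} {W : ∀ k, H →L[𝕜] K k} {M : ∀ k, K k →L[𝕜] K k}

lemma blockSum_apply (f : H) : blockSum V W M f = ∑ k, V k (M k (W k f)) := by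
  simp [blockSum]

lemma coord_blockSum_apply (hdiag : ∀ k u, W k (V k u) = u)
    (hoff : Pairwise fun i j => ∀ u, W i (V j u) = 0) (k : ι) (f : H) :
    W k (blockSum V W M f) = M k (W k f) := by
  rw [blockSum_apply, map_sum, Finset.sum_eq_single_of_mem k (Finset.mem_univ k), hdiag]
  exact fun j _ hjk => hoff hjk.symm _

lemma blockSum_embedding_apply (hdiag : ∀ k u, W k (V k u) = u)
    (hoff : Pairwise fun i j => ∀ u, W i (V j u) = 0) (k : ι) (u : K k) :
    blockSum V W M (V k u) = V k (M k u) := by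
  rw [blockSum_apply, Finset.sum_eq_single_of_mem k (Finset.mem_univ k), hdiag]
  intro j _ hjk
  rw [hoff hjk, map_zero, map_zero]

lemma blockSum_mul_blockSum (hdiag : ∀ k u, W k (V k u) = u)
    (hoff : Pairwise fun i j => ∀ u, W i (V j u) = 0) (N : ∀ k, K k →L[𝕜] K k) :
    blockSum V W M * blockSum V W N = blockSum V W (M * N) := by
  ext f
  rw [mul_apply_eq_comp]
  simp only [blockSum_apply (M := M), coord_blockSum_apply hdiag hoff]
  simp [blockSum_apply]

lemma not_isUnit_blockSum {f : H} (hf : f ≠ 0) (hWf : ∀ k, W k f = 0) :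
    ¬ IsUnit (blockSum V W M) := by
  intro hT
  obtain ⟨R, -, hRT⟩ := isUnit_iff_exists.1 hT
  apply hf
  calc f = R (blockSum V W M f) := (congrArg (· f) hRT).symm
    _ = 0 := by simp [blockSum_apply, hWf]

variable [ContinuousConstSMul 𝕜 H] [∀ k, IsTopologicalAddGroup (K k)]
  [∀ k, ContinuousConstSMul 𝕜 (K k)]

lemma blockSum_algebraMap_sub (l : 𝕜) :
    blockSum V W (fun k => algebraMap 𝕜 _ l - M k) = l • blockSum V W 1 - blockSum V W M := by
  ext f
  simp [blockSum_apply, Algebra.algebraMap_eq_smul_one, Finset.smul_sum]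

lemma isUnit_algebraMap_sub_blockSum (hdiag : ∀ k u, W k (V k u) = u)
    (hoff : Pairwise fun i j => ∀ u, W i (V j u) = 0) {l : 𝕜} (hl : l ≠ 0)
    (hM : ∀ k, IsUnit (algebraMap 𝕜 _ l - M k)) :
    IsUnit (algebraMap 𝕜 _ l - blockSum V W M) := by
  choose N hMN hNM using fun k => isUnit_iff_exists.1 (hM k)
  have hmul (A B : ∀ k, K k →L[𝕜] K k) := blockSum_mul_blockSum (M := A) hdiag hoff B
  refine isUnit_algebraMap_sub_of_corner_inverse (P := blockSum V W 1) (S := blockSum V W N) hl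
    (by rw [hmul, mul_one]) (by rw [hmul, one_mul]) (by rw [hmul, mul_one])
    (by rw [hmul, one_mul]) ?_ ?_
  · rw [← blockSum_algebraMap_sub, hmul]
    exact congrArg _ (funext hMN)
  · rw [← blockSum_algebraMap_sub, hmul]
    exact congrArg _ (funext hNM)

lemma isUnit_algebraMap_sub_of_isUnit_algebraMap_sub_blockSum (hdiag : ∀ k u, W k (V k u) = u)
    (hoff : Pairwise fun i j => ∀ u, W i (V j u) = 0) {l : 𝕜}
    (hT : IsUnit (algebraMap 𝕜 _ l - blockSum V W M)) (k : ι) :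
    IsUnit (algebraMap 𝕜 _ l - M k) := by
  obtain ⟨R, hTR, hRT⟩ := isUnit_iff_exists.1 hT
  have hWT : (algebraMap 𝕜 _ l - M k) ∘L W k = W k ∘L (algebraMap 𝕜 _ l - blockSum V W M) := by
    ext f
    simp [Algebra.algebraMap_eq_smul_one, coord_blockSum_apply hdiag hoff]
  have hTV : V k ∘L (algebraMap 𝕜 _ l - M k) = (algebraMap 𝕜 _ l - blockSum V W M) ∘L V k := by
    ext u
    simp [Algebra.algebraMap_eq_smul_one, blockSum_embedding_apply hdiag hoff]
  have hWV : W k ∘L V k = 1 := ContinuousLinearMap.ext (hdiag k)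
  refine isUnit_iff_exists.2 ⟨W k ∘L R ∘L V k, ?_, ?_⟩
  · calc (algebraMap 𝕜 _ l - M k) * (W k ∘L R ∘L V k)
        = ((algebraMap 𝕜 _ l - M k) ∘L W k) ∘L R ∘L V k := rfl
      _ = W k ∘L ((algebraMap 𝕜 _ l - blockSum V W M) * R) ∘L V k := by rw [hWT]; rfl
      _ = 1 := by rw [hTR]; exact hWV
  · calc (W k ∘L R ∘L V k) * (algebraMap 𝕜 _ l - M k)
        = W k ∘L R ∘L (V k ∘L (algebraMap 𝕜 _ l - M k)) := rfl
      _ = W k ∘L (R * (algebraMap 𝕜 _ l - blockSum V W M)) ∘L V k := by rw [hTV]; rfl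
      _ = 1 := by rw [hRT]; exact hWV

theorem spectrum_blockSum (hdiag : ∀ k u, W k (V k u) = u)
    (hoff : Pairwise fun i j => ∀ u, W i (V j u) = 0) {f : H} (hf : f ≠ 0)
    (hWf : ∀ k, W k f = 0) :
    spectrum 𝕜 (blockSum V W M) = {0} ∪ ⋃ k, spectrum 𝕜 (M k) := by
  ext l
  rw [← not_iff_not]
  simp only [Set.mem_union, Set.mem_singleton_iff, Set.mem_iUnion, not_or, not_exists,
    spectrum.notMem_iff]
  refine ⟨fun hT => ⟨?_, isUnit_algebraMap_sub_of_isUnit_algebraMap_sub_blockSum hdiag hoff hT⟩,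
    fun ⟨hl, hM⟩ => isUnit_algebraMap_sub_blockSum hdiag hoff hl hM⟩
  rintro rfl
  rw [map_zero, zero_sub, IsUnit.neg_iff] at hT
  exact not_isUnit_blockSum hf hWf hT

end BlockSum

lemma indicatorConstLp_ne_zero_s2 {Y E : Type*} [MeasurableSpace Y] [NormedAddCommGroup E]
    {ν : Measure Y} {p : ℝ≥0∞} (hp : p ≠ 0) {s : Set Y} (hs : MeasurableSet s) (hνs0 : ν s ≠ 0)
    (hνs : ν s ≠ ∞) {e : E} (he : e ≠ 0) : indicatorConstLp p hs hνs e ≠ 0 := by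
  rw [Ne, ← Lp.norm_eq_zero_iff (pos_iff_ne_zero.2 hp), norm_indicatorConstLp' hp hνs0,
    measureReal_def]
  exact mul_ne_zero (norm_ne_zero_iff.2 he)
    (Real.rpow_pos_of_pos (ENNReal.toReal_pos hνs0 hνs) _).ne'

section MulOperator

variable {𝕜 Y E : Type*} [NontriviallyNormedField 𝕜] [MeasurableSpace Y] [NormedAddCommGroup E]
  [NormedSpace 𝕜 E] {ν : Measure Y} {p : ℝ≥0∞} [Fact (1 ≤ p)] {m : Y → 𝕜}

variable (E p) in
/-- Multiplication by the essentially bounded function `m`, as an operator on `L^p`. -/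
def mulOperator (hm : MemLp m ∞ ν) : Lp E p ν →L[𝕜] Lp E p ν :=
  (ContinuousLinearMap.lsmul 𝕜 𝕜).holderL ν ∞ p p (hm.toLp m)

lemma coeFn_mulOperator (hm : MemLp m ∞ ν) (g : Lp E p ν) :
    mulOperator E p hm g =ᵐ[ν] fun y => m y • g y := by
  filter_upwards [(ContinuousLinearMap.lsmul 𝕜 𝕜).coeFn_holder (r := p) (hm.toLp m) g,
    hm.coeFn_toLp] with y hy hm_y
  rw [mulOperator, ContinuousLinearMap.holderL_apply_apply, hy, hm_y,
    ContinuousLinearMap.lsmul_apply]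

lemma mulOperator_mul_mulOperator_eq_one {m' : Y → 𝕜} (hm : MemLp m ∞ ν) (hm' : MemLp m' ∞ ν)
    (hmm' : ∀ᵐ y ∂ν, m y * m' y = 1) : mulOperator E p hm * mulOperator E p hm' = 1 := by
  ext1 g
  apply Lp.ext
  filter_upwards [coeFn_mulOperator hm (mulOperator E p hm' g), coeFn_mulOperator hm' g, hmm']
    with y hy hy' hone
  rw [mul_apply_eq_comp, hy, hy', smul_smul, hone, one_smul]
  rfl

lemma algebraMap_sub_mulOperator (l : 𝕜) (hm : MemLp m ∞ ν) :
    algebraMap 𝕜 _ l - mulOperator E p hm =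
      mulOperator E p (m := fun y => l - m y) ((memLp_top_const l).sub hm) := by
  ext1 g
  apply Lp.ext
  rw [Algebra.algebraMap_eq_smul_one]
  filter_upwards [Lp.coeFn_sub (l • g) (mulOperator E p hm g), Lp.coeFn_smul l g,
    coeFn_mulOperator hm g, coeFn_mulOperator (E := E) (p := p) ((memLp_top_const l).sub hm) g]
    with y hsub hsmul hmul hmul'
  change ((l • g - mulOperator E p hm g : Lp E p ν) : Y → E) y = _
  rw [hsub, hmul', Pi.sub_apply, hsmul, hmul, Pi.smul_apply, Pi.sub_apply, sub_smul]

lemma isUnit_mulOperator_of_le_norm (hm : MemLp m ∞ ν) {δ : ℝ} (hδ : 0 < δ)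
    (hδm : ∀ᵐ y ∂ν, δ ≤ ‖m y‖) : IsUnit (mulOperator E p hm) := by
  have hne : ∀ᵐ y ∂ν, m y ≠ 0 := hδm.mono fun y hy => norm_pos_iff.1 (hδ.trans_le hy)
  have hinv : MemLp (fun y => (m y)⁻¹) ∞ ν := by
    refine memLp_top_of_bound hm.1.inv₀ δ⁻¹ (hδm.mono fun y hy => ?_)
    rw [norm_inv]
    exact inv_anti₀ hδ hy
  exact isUnit_iff_exists.2 ⟨mulOperator E p hinv,
    mulOperator_mul_mulOperator_eq_one hm hinv (hne.mono fun y hy => mul_inv_cancel₀ hy),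
    mulOperator_mul_mulOperator_eq_one hinv hm (hne.mono fun y hy => inv_mul_cancel₀ hy)⟩

lemma exists_measurableSet_subset_measure_lt_top [SigmaFinite ν] {s : Set Y}
    (hs : NullMeasurableSet s ν) (hs0 : ν s ≠ 0) :
    ∃ t ⊆ s, MeasurableSet t ∧ ν t ≠ 0 ∧ ν t ≠ ∞ := by
  obtain ⟨s', hs's, hs'meas, hs'ae⟩ := hs.exists_measurable_subset_ae_eq
  obtain ⟨t, htmeas, hts', ht0, httop⟩ := Measure.exists_subset_measure_lt_top hs'meas
    (pos_iff_ne_zero.2 (measure_congr hs'ae ▸ hs0))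
  exact ⟨t, hts'.trans hs's, htmeas, ht0.ne', httop.ne⟩

lemma norm_mulOperator_indicatorConstLp_le (hm : MemLp m ∞ ν) {s : Set Y} (hs : MeasurableSet s)
    (hνs : ν s ≠ ∞) (e : E) {δ : ℝ} (hδ : ∀ y ∈ s, ‖m y‖ ≤ δ) :
    ‖mulOperator E p hm (indicatorConstLp p hs hνs e)‖ ≤ δ * ‖indicatorConstLp p hs hνs e‖ := by
  apply Lp.norm_le_mul_norm_of_ae_le_mul
  filter_upwards [coeFn_mulOperator hm (indicatorConstLp p hs hνs e),
    indicatorConstLp_coeFn (p := p) (hs := hs) (hμs := hνs) (c := e)] with y hmul hind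
  rw [hmul, hind, norm_smul]
  by_cases hy : y ∈ s
  · gcongr
    exact hδ y hy
  · simp [hy]

lemma exists_le_norm_of_isUnit_mulOperator [SigmaFinite ν] [Nontrivial E] (hm : MemLp m ∞ ν)
    (hunit : IsUnit (mulOperator E p hm)) : ∃ δ > 0, ∀ᵐ y ∂ν, δ ≤ ‖m y‖ := by
  obtain ⟨R, -, hR⟩ := isUnit_iff_exists.1 hunit
  refine ⟨(‖R‖ + 1)⁻¹, by positivity, ?_⟩
  by_contra hsmall
  rw [ae_iff] at hsmall
  have hnull : NullMeasurableSet {y | ¬ (‖R‖ + 1)⁻¹ ≤ ‖m y‖} ν :=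
    (nullMeasurableSet_le aemeasurable_const hm.1.norm.aemeasurable).compl
  obtain ⟨s, hs_small, hs, hνs0, hνs⟩ := exists_measurableSet_subset_measure_lt_top hnull hsmall
  obtain ⟨e, he⟩ := exists_ne (0 : E)
  set f : Lp E p ν := indicatorConstLp p hs hνs e
  have hf_pos : 0 < ‖f‖ := norm_pos_iff.2
    (indicatorConstLp_ne_zero_s2 (zero_lt_one.trans_le Fact.out).ne' hs hνs0 hνs he)
  have hf_lt : ‖f‖ < ‖f‖ := calc
    ‖f‖ = ‖R (mulOperator E p hm f)‖ := congrArg (‖·‖) (congrArg (· f) hR).symm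
    _ ≤ ‖R‖ * ((‖R‖ + 1)⁻¹ * ‖f‖) := (R.le_opNorm _).trans (by
      gcongr
      exact norm_mulOperator_indicatorConstLp_le hm hs hνs e
        fun y hy => (not_le.1 (hs_small hy)).le)
    _ < (‖R‖ + 1) * ((‖R‖ + 1)⁻¹ * ‖f‖) := by gcongr; exact lt_add_one _
    _ = ‖f‖ := mul_inv_cancel_left₀ (by positivity) _
  exact hf_lt.false

theorem spectrum_mulOperator [MeasurableSpace 𝕜] [BorelSpace 𝕜] [SigmaFinite ν] [Nontrivial E]
    (hm : MemLp m ∞ ν) : spectrum 𝕜 (mulOperator E p hm) = (ν.map m).support := by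
  ext l
  rw [← not_iff_not, spectrum.notMem_iff, algebraMap_sub_mulOperator,
    notMem_support_map_iff hm.1.aemeasurable]
  simp only [dist_comm _ l, dist_eq_norm]
  exact ⟨exists_le_norm_of_isUnit_mulOperator _,
    fun ⟨_, hδ, hδm⟩ => isUnit_mulOperator_of_le_norm _ hδ hδm⟩

end MulOperator

section TensorLeft

variable {𝕜 X Y : Type*} [RCLike 𝕜] [MeasurableSpace X] [MeasurableSpace Y] {μ : Measure X}
  {ν : Measure Y}

lemma memLp_two_mul_prod {ψ : X → 𝕜} {g : Y → 𝕜} (hψ : MemLp ψ 2 μ) (hg : MemLp g 2 ν) :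
    MemLp (fun z : X × Y => ψ z.1 * g z.2) 2 (μ.prod ν) := by
  refine (memLp_two_iff_integrable_sq_norm (hψ.1.comp_fst.mul hg.1.comp_snd)).2 ?_
  simpa only [Pi.mul_apply, norm_mul, mul_pow] using
    hψ.norm.integrable_sq.mul_prod hg.norm.integrable_sq

variable (ν) in
/-- The linear map `g ↦ ψ ⊗ g` from `L²(ν)` to `L²(μ ⊗ ν)`, where `(ψ ⊗ g) (x, y) = ψ x * g y`. -/
def tensorLeftₗ (ψ : Lp 𝕜 2 μ) : Lp 𝕜 2 ν →ₗ[𝕜] Lp 𝕜 2 (μ.prod ν) where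
  toFun g := (memLp_two_mul_prod (Lp.memLp ψ) (Lp.memLp g)).toLp
  map_add' f g := by
    rw [← MemLp.toLp_add]
    apply MemLp.toLp_congr
    filter_upwards [Measure.quasiMeasurePreserving_snd.ae (Lp.coeFn_add f g)] with z hz
    simp only [hz, Pi.add_apply, mul_add]
  map_smul' c g := by
    rw [RingHom.id_apply, ← MemLp.toLp_const_smul]
    apply MemLp.toLp_congr
    filter_upwards [Measure.quasiMeasurePreserving_snd.ae (Lp.coeFn_smul c g)] with z hz
    simp only [hz, Pi.smul_apply, smul_eq_mul, mul_left_comm]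

lemma coeFn_tensorLeftₗ (ψ : Lp 𝕜 2 μ) (g : Lp 𝕜 2 ν) :
    tensorLeftₗ ν ψ g =ᵐ[μ.prod ν] fun z => ψ z.1 * g z.2 :=
  (memLp_two_mul_prod (Lp.memLp ψ) (Lp.memLp g)).coeFn_toLp

variable [SFinite ν]

lemma integrable_star_mul_prod_restrict (ψ : Lp 𝕜 2 μ) {F : X × Y → 𝕜}
    (hF : MemLp F 2 (μ.prod ν)) {s : Set Y} (hνs : ν s ≠ ∞) :
    Integrable (fun z => star (ψ z.1) * F z) (μ.prod (ν.restrict s)) := by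
  have : IsFiniteMeasure (ν.restrict s) := isFiniteMeasure_restrict.2 hνs
  exact ((Lp.memLp ψ).star.comp_fst _).integrable_mul
    (hF.mono_measure (Measure.prod_mono le_rfl Measure.restrict_le_self))

variable [SFinite μ]

lemma ae_memLp_two_prodMk_left {F : X × Y → 𝕜} (hF : MemLp F 2 (μ.prod ν)) :
    ∀ᵐ y ∂ν, MemLp (fun x => F (x, y)) 2 μ := by
  have hswap : AEStronglyMeasurable (F ∘ Prod.swap) (ν.prod μ) := hF.1.prod_swap
  filter_upwards [hF.norm.integrable_sq.prod_left_ae, hswap.prodMk_left] with y hint hmeas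
  exact (memLp_two_iff_integrable_sq_norm hmeas).2 hint

lemma inner_tensorLeftₗ (ψ ψ' : Lp 𝕜 2 μ) (g g' : Lp 𝕜 2 ν) :
    inner 𝕜 (tensorLeftₗ ν ψ g) (tensorLeftₗ ν ψ' g') = inner 𝕜 ψ ψ' * inner 𝕜 g g' := by
  rw [L2.inner_def, L2.inner_def, L2.inner_def, ← integral_prod_mul]
  apply integral_congr_ae
  filter_upwards [coeFn_tensorLeftₗ ψ g, coeFn_tensorLeftₗ ψ' g'] with z hz hz'
  simp only [hz, hz', RCLike.inner_apply, map_mul]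
  ring

lemma norm_tensorLeftₗ (ψ : Lp 𝕜 2 μ) (g : Lp 𝕜 2 ν) :
    ‖tensorLeftₗ ν ψ g‖ = ‖ψ‖ * ‖g‖ := by
  rw [← sq_eq_sq₀ (norm_nonneg _) (by positivity), mul_pow]
  have hinner := inner_tensorLeftₗ ψ ψ g g
  simp only [inner_self_eq_norm_sq_to_K] at hinner
  exact_mod_cast hinner

variable (ν) in
/-- The operator `g ↦ ψ ⊗ g` from `L²(ν)` to `L²(μ ⊗ ν)`; its adjoint is partial integration
against `ψ`. -/
def tensorLeft (ψ : Lp 𝕜 2 μ) : Lp 𝕜 2 ν →L[𝕜] Lp 𝕜 2 (μ.prod ν) :=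
  (tensorLeftₗ ν ψ).mkContinuous ‖ψ‖ fun g => (norm_tensorLeftₗ ψ g).le

lemma coeFn_tensorLeft (ψ : Lp 𝕜 2 μ) (g : Lp 𝕜 2 ν) :
    tensorLeft ν ψ g =ᵐ[μ.prod ν] fun z => ψ z.1 * g z.2 :=
  coeFn_tensorLeftₗ ψ g

lemma tensorLeft_ne_zero {ψ : Lp 𝕜 2 μ} {g : Lp 𝕜 2 ν} (hψ : ψ ≠ 0) (hg : g ≠ 0) :
    tensorLeft ν ψ g ≠ 0 := by
  rw [← norm_ne_zero_iff] at *
  exact (norm_tensorLeftₗ ψ g).trans_ne (mul_ne_zero hψ hg)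

lemma adjoint_tensorLeft_tensorLeft (ψ ψ' : Lp 𝕜 2 μ) (g : Lp 𝕜 2 ν) :
    (tensorLeft ν ψ).adjoint (tensorLeft ν ψ' g) = inner 𝕜 ψ ψ' • g := by
  refine ext_inner_left 𝕜 fun f => ?_
  rw [ContinuousLinearMap.adjoint_inner_right, inner_smul_right]
  exact inner_tensorLeftₗ ψ ψ' f g

lemma inner_tensorLeft_indicatorConstLp_one (ψ : Lp 𝕜 2 μ) (F : Lp 𝕜 2 (μ.prod ν))
    {s : Set Y} (hs : MeasurableSet s) (hνs : ν s ≠ ∞) :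
    inner 𝕜 (tensorLeft ν ψ (indicatorConstLp 2 hs hνs 1)) F =
      ∫ y in s, ∫ x, star (ψ x) * F (x, y) ∂μ ∂ν := by
  have hsnd : MeasurableSet (Prod.snd ⁻¹' s : Set (X × Y)) := measurable_snd hs
  calc inner 𝕜 (tensorLeft ν ψ (indicatorConstLp 2 hs hνs 1)) F
      = ∫ z, (Prod.snd ⁻¹' s).indicator (fun z => star (ψ z.1) * F z) z ∂(μ.prod ν) := by
        rw [L2.inner_def]
        apply integral_congr_ae
        filter_upwards [coeFn_tensorLeft ψ (indicatorConstLp 2 hs hνs 1),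
          Measure.quasiMeasurePreserving_snd.ae
            (indicatorConstLp_coeFn (p := 2) (hs := hs) (hμs := hνs) (c := (1 : 𝕜)))] with z hz hind
        rw [hz, hind, RCLike.inner_apply]
        by_cases hzs : z.2 ∈ s <;> simp [hzs, mul_comm]
    _ = ∫ z, star (ψ z.1) * F z ∂(μ.prod (ν.restrict s)) := by
        rw [integral_indicator hsnd, ← Set.univ_prod, ← Measure.prod_restrict,
          Measure.restrict_univ]
    _ = ∫ y in s, ∫ x, star (ψ x) * F (x, y) ∂μ ∂ν :=
        integral_prod_symm _ (integrable_star_mul_prod_restrict ψ (Lp.memLp F) hνs)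

end TensorLeft

section Rank

lemma exists_ne_zero_forall_inner_eq_zero {𝕜 E ι : Type*} [RCLike 𝕜] [NormedAddCommGroup E]
    [InnerProductSpace 𝕜 E] [Fintype ι] (v : ι → E) (hrank : Fintype.card ι < Module.rank 𝕜 E) :
    ∃ x : E, x ≠ 0 ∧ ∀ k, inner 𝕜 (v k) x = 0 := by
  set S := Submodule.span 𝕜 (Set.range v)
  have : FiniteDimensional 𝕜 S := FiniteDimensional.span_of_finite 𝕜 (Set.finite_range v)
  have hS_ne_top : S ≠ ⊤ := by
    intro htop
    have hle : Module.rank 𝕜 E ≤ Fintype.card ι := by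
      rw [← rank_top, ← htop, ← Module.finrank_eq_rank]
      exact_mod_cast finrank_range_le_card v
    exact hrank.not_ge hle
  obtain ⟨x, hx, hx0⟩ := Submodule.exists_mem_ne_zero_of_ne_bot
    (mt Submodule.orthogonal_eq_bot_iff.1 hS_ne_top)
  exact ⟨x, hx0, fun k => hx _ (Submodule.subset_span (Set.mem_range_self k))⟩

lemma aleph0_le_rank_Lp_two {𝕜 X ι : Type*} [RCLike 𝕜] [MeasurableSpace X] {μ : Measure X}
    [Infinite ι] {s : ι → Set X} (hs : ∀ i, MeasurableSet (s i)) (hμ0 : ∀ i, μ (s i) ≠ 0)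
    (hμtop : ∀ i, μ (s i) ≠ ∞) (hdisj : Pairwise fun i j => AEDisjoint μ (s i) (s j)) :
    Cardinal.aleph0 ≤ Module.rank 𝕜 (Lp 𝕜 2 μ) := by
  have hindep : LinearIndependent 𝕜 fun i => indicatorConstLp 2 (hs i) (hμtop i) (1 : 𝕜) := by
    refine linearIndependent_of_ne_zero_of_inner_eq_zero (fun i => ?_) fun i j hij => ?_
    · exact indicatorConstLp_ne_zero_s2 two_ne_zero (hs i) (hμ0 i) (hμtop i) one_ne_zero
    · have hinter : μ (s i ∩ s j) = 0 := hdisj hij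
      simp [L2.inner_indicatorConstLp_one_indicatorConstLp_one (hs i) (hs j) (hμtop i) (hμtop j),
        measureReal_def, hinter]
  exact hindep.aleph0_le_rank

lemma aleph0_le_rank_Lp_two_muI {𝕜 : Type*} [RCLike 𝕜] {a b : ℝ} (hab : a < b) :
    Cardinal.aleph0 ≤ Module.rank 𝕜 (Lp 𝕜 2 (muI a b)) := by
  have : Infinite (Set.Ioo a b) := (Set.Ioo_infinite hab).to_subtype
  obtain ⟨U, hUinf, hUopen, hUdisj⟩ := exists_seq_infinite_isOpen_pairwise_disjoint (Set.Ioo a b)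
  have hopen n : IsOpen ((↑) '' U n : Set ℝ) := isOpen_Ioo.isOpenMap_subtype_val _ (hUopen n)
  refine aleph0_le_rank_Lp_two (fun n => (hopen n).measurableSet) (fun n => ?_)
    (fun n => measure_ne_top _ _)
    fun i j hij => ((Set.disjoint_image_iff Subtype.val_injective).2 (hUdisj hij)).aedisjoint
  rw [Measure.restrict_eq_self _ ((Subtype.coe_image_subset _ _).trans Set.Ioo_subset_Icc_self)]
  exact ((hopen n).measure_pos _ ((hUinf n).nonempty.image _)).ne'

end Rank

lemma memLp_top_ofReal_of_forall_ae_abs_le {Y : Type*} [MeasurableSpace Y] {ν : Measure Y}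
    {h : Y → ℝ} (hmeas : AEMeasurable h ν) (hbdd : ∃ C : ℝ, ∀ᵐ y ∂ν, |h y| ≤ C) :
    MemLp (fun y => (h y : ℂ)) ∞ ν := by
  obtain ⟨C, hC⟩ := hbdd
  exact (memLp_top_of_bound hmeas.aestronglyMeasurable C hC).ofReal

lemma muI_ne_zero {c d : ℝ} (hcd : c < d) : muI c d ≠ 0 := by
  simpa [Measure.restrict_eq_zero] using hcd

section PartialIntegral

variable {𝕜 X Y ι : Type*} [RCLike 𝕜] [MeasurableSpace X] [MeasurableSpace Y] [Fintype ι]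
  {μ : Measure X} {ν : Measure Y} {φ : ι → X → 𝕜}

lemma inner_toLp_eq_integral_star_mul {ψ ψ' : X → 𝕜} (hψ : MemLp ψ 2 μ) (hψ' : MemLp ψ' 2 μ) :
    inner 𝕜 hψ.toLp hψ'.toLp = ∫ x, star (ψ x) * ψ' x ∂μ := by
  rw [L2.inner_def]
  apply integral_congr_ae
  filter_upwards [hψ.coeFn_toLp, hψ'.coeFn_toLp] with x hx hx'
  rw [hx, hx', RCLike.inner_apply', RCLike.star_def]

variable [SFinite μ] [SigmaFinite ν]

lemma coeFn_adjoint_tensorLeft (ψ : Lp 𝕜 2 μ) (F : Lp 𝕜 2 (μ.prod ν)) :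
    (tensorLeft ν ψ).adjoint F =ᵐ[ν] fun y => ∫ x, star (ψ x) * F (x, y) ∂μ := by
  refine ae_eq_of_forall_setIntegral_eq_of_sigmaFinite
    (fun s _ hνs => integrableOn_Lp_of_measure_ne_top _ one_le_two hνs.ne)
    (fun s _ hνs =>
      (integrable_star_mul_prod_restrict ψ (Lp.memLp F) hνs.ne).integral_prod_right)
    fun s hs hνs => ?_
  rw [← inner_tensorLeft_indicatorConstLp_one ψ F hs hνs.ne,
    ← ContinuousLinearMap.adjoint_inner_right, L2.inner_indicatorConstLp_one]

lemma coeFn_adjoint_tensorLeft_toLp {ψ : X → 𝕜} (hψ : MemLp ψ 2 μ) (F : Lp 𝕜 2 (μ.prod ν)) :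
    (tensorLeft ν hψ.toLp).adjoint F =ᵐ[ν] fun y => ∫ x, star (ψ x) * F (x, y) ∂μ := by
  filter_upwards [coeFn_adjoint_tensorLeft hψ.toLp F] with y hy
  rw [hy]
  exact integral_congr_ae (hψ.coeFn_toLp.mono fun x hx => by simp only [hx])

lemma eq_blockSum_of_ae_eq_integral (hφ : ∀ k, MemLp (φ k) 2 μ) {h : ι → Y → 𝕜}
    (hh : ∀ k, MemLp (h k) ∞ ν) {T : Lp 𝕜 2 (μ.prod ν) →L[𝕜] Lp 𝕜 2 (μ.prod ν)}
    (hT : ∀ f : Lp 𝕜 2 (μ.prod ν), ∀ᵐ z ∂(μ.prod ν),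
      T f z = ∫ s, (∑ k, φ k z.1 * star (φ k s) * h k z.2) * f (s, z.2) ∂μ) :
    T = blockSum (fun k => tensorLeft ν (hφ k).toLp) (fun k => (tensorLeft ν (hφ k).toLp).adjoint)
      fun k => mulOperator 𝕜 2 (hh k) := by
  ext1 f
  apply Lp.ext
  have hfst (k : ι) : ∀ᵐ z ∂(μ.prod ν), ((hφ k).toLp : X → 𝕜) z.1 = φ k z.1 :=
    Measure.quasiMeasurePreserving_fst.ae (hφ k).coeFn_toLp
  set W := fun k => (tensorLeft ν (hφ k).toLp).adjoint
  have hmul (k : ι) : ∀ᵐ z ∂(μ.prod ν), mulOperator 𝕜 2 (hh k) (W k f) z.2 = h k z.2 * W k f z.2 :=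
    Measure.quasiMeasurePreserving_snd.ae (coeFn_mulOperator (hh k) (W k f))
  have hadj (k : ι) : ∀ᵐ z ∂(μ.prod ν), W k f z.2 = ∫ s, star (φ k s) * f (s, z.2) ∂μ :=
    Measure.quasiMeasurePreserving_snd.ae (coeFn_adjoint_tensorLeft_toLp (hφ k) f)
  rw [blockSum_apply]
  filter_upwards [hT f, Lp.coeFn_fun_finsetSum Finset.univ fun k =>
      tensorLeft ν (hφ k).toLp (mulOperator 𝕜 2 (hh k) (W k f)),
    ae_all_iff.2 fun k => coeFn_tensorLeft (ν := ν) (hφ k).toLp (mulOperator 𝕜 2 (hh k) (W k f)),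
    ae_all_iff.2 hfst, ae_all_iff.2 hmul, ae_all_iff.2 hadj,
    Measure.quasiMeasurePreserving_snd.ae (ae_memLp_two_prodMk_left (Lp.memLp f))]
    with z hTz hsum htensor hfst hmul hadj hmem
  have hint (k : ι) : Integrable (fun s => star (φ k s) * f (s, z.2)) μ :=
    (hφ k).star.integrable_mul hmem
  calc T f z = ∫ s, ∑ k, φ k z.1 * h k z.2 * (star (φ k s) * f (s, z.2)) ∂μ := by
        rw [hTz]
        congr with s
        rw [Finset.sum_mul]
        exact Finset.sum_congr rfl fun k _ => by ring
    _ = ∑ k, φ k z.1 * h k z.2 * ∫ s, star (φ k s) * f (s, z.2) ∂μ := by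
        rw [integral_finsetSum _ fun k _ => (hint k).const_mul _]
        simp only [integral_const_mul]
    _ = (∑ k, tensorLeft ν (hφ k).toLp (mulOperator 𝕜 2 (hh k) (W k f)) :
          Lp 𝕜 2 (μ.prod ν)) z := by
        simp only [hsum, htensor, hfst, hmul, hadj, mul_assoc]

lemma exists_ne_zero_forall_adjoint_tensorLeft_eq_zero (hν : ν ≠ 0) (v : ι → Lp 𝕜 2 μ)
    (hrank : Fintype.card ι < Module.rank 𝕜 (Lp 𝕜 2 μ)) :
    ∃ f : Lp 𝕜 2 (μ.prod ν), f ≠ 0 ∧ ∀ k, (tensorLeft ν (v k)).adjoint f = 0 := by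
  obtain ⟨ψ, hψ, hvψ⟩ := exists_ne_zero_forall_inner_eq_zero v hrank
  obtain ⟨t, -, ht, hνt0, hνt⟩ := exists_measurableSet_subset_measure_lt_top (ν := ν)
    MeasurableSet.univ.nullMeasurableSet (Measure.measure_univ_ne_zero.2 hν)
  refine ⟨tensorLeft ν ψ (indicatorConstLp 2 ht hνt 1),
    tensorLeft_ne_zero hψ (indicatorConstLp_ne_zero_s2 two_ne_zero ht hνt0 hνt one_ne_zero),
    fun k => ?_⟩
  rw [adjoint_tensorLeft_tensorLeft, hvψ k, zero_smul]

theorem statement2_general [DecidableEq ι] (hν : ν ≠ 0)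
    (hrank : Fintype.card ι < Module.rank 𝕜 (Lp 𝕜 2 μ)) (hφ : ∀ k, MemLp (φ k) 2 μ)
    (hφON : ∀ i j, ∫ x, star (φ i x) * φ j x ∂μ = if i = j then 1 else 0) {h : ι → Y → 𝕜}
    (hh : ∀ k, MemLp (h k) ∞ ν) (T : Lp 𝕜 2 (μ.prod ν) →L[𝕜] Lp 𝕜 2 (μ.prod ν))
    (hT : ∀ f : Lp 𝕜 2 (μ.prod ν), ∀ᵐ z ∂(μ.prod ν),
      T f z = ∫ s, (∑ k, φ k z.1 * star (φ k s) * h k z.2) * f (s, z.2) ∂μ) :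
    spectrum 𝕜 T = {0} ∪ ⋃ k, (ν.map (h k)).support := by
  have hproj (i j : ι) (u : Lp 𝕜 2 ν) : (tensorLeft ν (hφ i).toLp).adjoint
      (tensorLeft ν (hφ j).toLp u) = (if i = j then (1 : 𝕜) else 0) • u := by
    rw [adjoint_tensorLeft_tensorLeft, inner_toLp_eq_integral_star_mul, hφON]
  obtain ⟨f, hf, hWf⟩ :=
    exists_ne_zero_forall_adjoint_tensorLeft_eq_zero hν (fun k => (hφ k).toLp) hrank
  rw [eq_blockSum_of_ae_eq_integral hφ hh hT,
    spectrum_blockSum (fun k u => by simp [hproj]) (fun i j hij u => by simp [hproj, hij]) hf hWf]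
  simp only [spectrum_mulOperator]

end PartialIntegral

theorem statement2
    (a b c d : ℝ) (hab : a < b) (hcd : c < d)
    (n : ℕ) (hn : 1 ≤ n)
    (φ : Fin n → ℝ → ℂ)
    (hφL2 : ∀ k, MemLp (φ k) 2 (muI a b))
    (hφON : ∀ i j, ∫ x, star (φ i x) * φ j x ∂(muI a b) = if i = j then 1 else 0)
    (h : Fin n → ℝ → ℝ)
    (hhmeas : ∀ k, Measurable (h k))
    (hhbdd : ∀ k, ∃ C : ℝ, ∀ᵐ y ∂(muI c d), |h k y| ≤ C)
    (T1 : Lp ℂ 2 ((muI a b).prod (muI c d)) →L[ℂ] Lp ℂ 2 ((muI a b).prod (muI c d)))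
    (hT1sa : IsSelfAdjoint T1)
    (hT1 : ∀ f : Lp ℂ 2 ((muI a b).prod (muI c d)),
      ∀ᵐ z ∂((muI a b).prod (muI c d)),
        T1 f z = ∫ s, (∑ k, φ k z.1 * star (φ k s) * (h k z.2 : ℂ)) * f (s, z.2) ∂(muI a b)) :
    spectrum ℂ T1 = {0} ∪ ⋃ k : Fin n, (fun r : ℝ => (r : ℂ)) '' Essran (muI c d) (h k) := by
  simp only [image_ofReal_Essran (hhmeas _).aemeasurable]
  exact statement2_general (muI_ne_zero hcd)
    (Cardinal.natCast_lt_aleph0.trans_le (aleph0_le_rank_Lp_two_muI hab)) hφL2 hφON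
    (fun k => memLp_top_ofReal_of_forall_ae_abs_le (hhmeas k).aemeasurable (hhbdd k)) T1 hT1
end
end
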